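/- Let X^n = (X_1,…,X_n) be i.i.d. with distribution p_X on a finite alphabet X, let J be uniform on [2^{nR_c}] and independent of X^n, and let M be any random variable taking values in [2^{nR}] jointly distributed with (X^n, J). Let T be uniform on [n], independent of everything else, and set V = (M, J, T, Y^{T−1}) for any Y^n satisfying the Markov chain X^n − (M,J) − Y^n. Then nR ≥ H(M) implies R ≥ I(V ; X_T). -/

import Mathlib

open MeasureTheory ProbabilityTheory Real

/-- Shannon entropy (base 2) of a distribution on a finite type. -/
noncomputable def entropy {α : Type*} [Fintype α] [MeasurableSpace α] (μ : Measure α) : ℝ :=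
  -∑ x : α, (μ {x}).toReal * Real.logb 2 (μ {x}).toReal

/-- Shannon mutual information (base 2) between the coordinates of a joint distribution. -/
noncomputable def mutualInfo {α β : Type*} [Fintype α] [MeasurableSpace α]
    [Fintype β] [MeasurableSpace β] (μ : Measure (α × β)) : ℝ :=
  entropy (μ.map Prod.fst) + entropy (μ.map Prod.snd) - entropy μ

/-- The uniform distribution on a finite type. -/
noncomputable def unif (α : Type*) [Fintype α] [MeasurableSpace α] : Measure α :=
  (Fintype.card α : ENNReal)⁻¹ • Measure.count

/-- Discrete measurable structure on `Option`. -/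
instance {α : Type*} : MeasurableSpace (Option α) := ⊤

/-- The prefix y^{t-1} of a sequence y^n, encoded as a function `Fin n → Option X`
revealing exactly the first t coordinates. -/
def prefixOf {X : Type*} {n : ℕ} (y : Fin n → X) (t : Fin n) : Fin n → Option X :=
  fun i => if (i : ℕ) < (t : ℕ) then some (y i) else none

/-! With `T` uniform and the `X_t` identically distributed, `X_T` is independent of `T`, so
`n I(V; X_T) = ∑ₜ I(M, J, Y^{t-1}; X_t)`. By data processing each term is at most
`I(M, J, Y^n; X_t)`, and since the `X_t` are independent these sum to at most `I(M, J, Y^n; X^n)`.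
The Markov chain turns this into `I(M, J; X^n)`, which is at most `H(M)` because `J` is independent
of `X^n`. -/

instance {α : Type*} : DiscreteMeasurableSpace (Option α) := ⟨fun _ => trivial⟩

lemma entropy_eq_sum_negMulLog {α : Type*} [Fintype α] [MeasurableSpace α] (μ : Measure α) :
    entropy μ = (∑ x, negMulLog (μ.real {x})) / Real.log 2 := by
  simp only [entropy, negMulLog, logb, Measure.real, Finset.sum_div, ← Finset.sum_neg_distrib,
    neg_mul, neg_div, mul_div_assoc]

lemma measureReal_singleton_le_map {Ω α : Type*} [MeasurableSpace Ω] [MeasurableSpace α]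
    [MeasurableSingletonClass α] (μ : Measure Ω) [IsFiniteMeasure μ] {f : Ω → α}
    (hf : Measurable f) (ω : Ω) : μ.real {ω} ≤ (μ.map f).real {f ω} := by
  rw [map_measureReal_apply hf (measurableSet_singleton _)]
  exact measureReal_mono (by simp)

section Entropy

variable {Ω α β γ : Type*} [MeasurableSpace Ω]
  [Fintype α] [MeasurableSpace α] [MeasurableSingletonClass α]
  [Fintype β] [MeasurableSpace β] [MeasurableSingletonClass β]
  [Fintype γ] [MeasurableSpace γ] [MeasurableSingletonClass γ]

lemma entropy_map_eq_sum (μ : Measure α) [IsFiniteMeasure μ] (f : α → β) :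
    entropy (μ.map f) = -∑ x, μ.real {x} * logb 2 ((μ.map f).real {f x}) := by
  have hf : Measurable f := measurable_of_finite f
  calc entropy (μ.map f)
      = -∫ y, logb 2 ((μ.map f).real {y}) ∂μ.map f := by
        rw [integral_fintype .of_finite]; rfl
    _ = -∑ x, μ.real {x} * logb 2 ((μ.map f).real {f x}) := by
        rw [integral_map hf.aemeasurable .of_discrete, integral_fintype .of_finite]; rfl

lemma entropy_map_le (μ : Measure α) [IsFiniteMeasure μ] (f : α → β) :
    entropy (μ.map f) ≤ entropy μ := by
  rw [entropy_map_eq_sum]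
  refine neg_le_neg (Finset.sum_le_sum fun x _ => ?_)
  rcases (measureReal_nonneg (μ := μ) (s := {x})).eq_or_lt with hx | hx
  · simp [← hx, ← measureReal_def]
  · have := measureReal_singleton_le_map μ (measurable_of_finite f) x
    rw [← measureReal_def]
    gcongr
    norm_num

lemma entropy_map_comp_le (μ : Measure Ω) [IsFiniteMeasure μ] {f : Ω → α} (hf : Measurable f)
    (g : α → β) : entropy (μ.map fun ω => g (f ω)) ≤ entropy (μ.map f) := by
  simpa only [Measure.map_map (measurable_of_finite g) hf, Function.comp_def]
    using entropy_map_le (μ.map f) g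

lemma entropy_map_prodMk_comm (μ : Measure Ω) [IsFiniteMeasure μ] {f : Ω → α} {g : Ω → β}
    (hf : Measurable f) (hg : Measurable g) :
    entropy (μ.map fun ω => (f ω, g ω)) = entropy (μ.map fun ω => (g ω, f ω)) :=
  le_antisymm (entropy_map_comp_le μ (hg.prodMk hf) Prod.swap)
    (entropy_map_comp_le μ (hf.prodMk hg) Prod.swap)

lemma entropy_le_neg_sum_mul_logb {μ ν : Measure α} [IsProbabilityMeasure μ]
    [IsProbabilityMeasure ν] (hμν : ∀ x, ν.real {x} = 0 → μ.real {x} = 0) :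
    entropy μ ≤ -∑ x, μ.real {x} * logb 2 (ν.real {x}) := by
  have hterm (x : α) : μ.real {x} * Real.log (ν.real {x}) - μ.real {x} * Real.log (μ.real {x})
      ≤ ν.real {x} - μ.real {x} := by
    rcases (measureReal_nonneg (μ := μ) (s := {x})).eq_or_lt with hμ | hμ
    · simp [← hμ, measureReal_nonneg]
    have hν : 0 < ν.real {x} := measureReal_nonneg.lt_of_ne' fun h => hμ.ne' (hμν x h)
    have hlog := Real.log_le_sub_one_of_pos (div_pos hν hμ)
    rw [Real.log_div hν.ne' hμ.ne'] at hlog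
    calc _ = μ.real {x} * (Real.log (ν.real {x}) - Real.log (μ.real {x})) := by ring
      _ ≤ μ.real {x} * (ν.real {x} / μ.real {x} - 1) := by gcongr
      _ = ν.real {x} - μ.real {x} := by field_simp
  have hsum := Finset.sum_le_sum fun x (_ : x ∈ Finset.univ) => hterm x
  simp only [Finset.sum_sub_distrib, sum_measureReal_singleton, Finset.coe_univ, probReal_univ,
    sub_self, sub_nonpos] at hsum
  simp only [entropy, ← measureReal_def, logb, ← mul_div_assoc, ← Finset.sum_div]
  gcongr

lemma entropy_le_add (μ : Measure (α × β)) [IsProbabilityMeasure μ] :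
    entropy μ ≤ entropy (μ.map Prod.fst) + entropy (μ.map Prod.snd) := by
  set μ₁ := μ.map Prod.fst with hμ₁
  set μ₂ := μ.map Prod.snd with hμ₂
  have : IsProbabilityMeasure μ₁ := Measure.isProbabilityMeasure_map (by fun_prop)
  have : IsProbabilityMeasure μ₂ := Measure.isProbabilityMeasure_map (by fun_prop)
  have hprod (x : α × β) : (μ₁.prod μ₂).real {x} = μ₁.real {x.1} * μ₂.real {x.2} := by
    rw [← measureReal_prod_prod, Set.singleton_prod_singleton]
  have hzero₁ (x : α × β) (hx : μ₁.real {x.1} = 0) : μ.real {x} = 0 :=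
    le_antisymm (hx ▸ measureReal_singleton_le_map μ measurable_fst x) measureReal_nonneg
  have hzero₂ (x : α × β) (hx : μ₂.real {x.2} = 0) : μ.real {x} = 0 :=
    le_antisymm (hx ▸ measureReal_singleton_le_map μ measurable_snd x) measureReal_nonneg
  calc entropy μ
      ≤ -∑ x, μ.real {x} * logb 2 ((μ₁.prod μ₂).real {x}) :=
        entropy_le_neg_sum_mul_logb fun x hx =>
          (mul_eq_zero.1 ((hprod x).symm.trans hx)).elim (hzero₁ x) (hzero₂ x)
    _ = -∑ x, (μ.real {x} * logb 2 (μ₁.real {x.1}) + μ.real {x} * logb 2 (μ₂.real {x.2})) := by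
        congr! 2 with x
        by_cases hx : μ.real {x} = 0
        · simp [hx]
        · rw [hprod, logb_mul (mt (hzero₁ x) hx) (mt (hzero₂ x) hx), mul_add]
    _ = entropy μ₁ + entropy μ₂ := by
        rw [Finset.sum_add_distrib, neg_add, hμ₁, entropy_map_eq_sum, hμ₂, entropy_map_eq_sum]

lemma entropy_map_prodMk_le (μ : Measure Ω) [IsProbabilityMeasure μ] {f : Ω → α} {g : Ω → β}
    (hf : Measurable f) (hg : Measurable g) :
    entropy (μ.map fun ω => (f ω, g ω)) ≤ entropy (μ.map f) + entropy (μ.map g) := by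
  have : IsProbabilityMeasure (μ.map fun ω => (f ω, g ω)) :=
    Measure.isProbabilityMeasure_map (by fun_prop)
  have hle := entropy_le_add (μ.map fun ω => (f ω, g ω))
  rwa [← Measure.fst, ← Measure.snd, Measure.fst_map_prodMk hg, Measure.snd_map_prodMk hf] at hle

lemma entropy_compProd (ρ : Measure α) [IsFiniteMeasure ρ] (κ : Kernel α β) [IsMarkovKernel κ] :
    entropy (ρ ⊗ₘ κ) = entropy ρ + ∫ a, entropy (κ a) ∂ρ := by
  have hsingleton (a : α) (b : β) : (ρ ⊗ₘ κ).real {(a, b)} = ρ.real {a} * (κ a).real {b} := by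
    rw [← Set.singleton_prod_singleton, measureReal_def, Measure.compProd_apply_prod
      (measurableSet_singleton a) (measurableSet_singleton b), Measure.restrict_singleton]
    simp [measureReal_def]
  simp only [integral_fintype Integrable.of_finite, entropy_eq_sum_negMulLog,
    Fintype.sum_prod_type, hsingleton, negMulLog_mul, Finset.sum_add_distrib,
    ← Finset.sum_mul, ← Finset.mul_sum, sum_measureReal_singleton, Finset.coe_univ,
    probReal_univ, one_mul, add_div, Finset.sum_div, smul_eq_mul, mul_div_assoc]

lemma entropy_pi {ι : Type*} [Fintype ι] [DecidableEq ι] (ρ : ι → Measure α)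
    [∀ i, IsProbabilityMeasure (ρ i)] :
    entropy (Measure.pi ρ) = ∑ i, entropy (ρ i) := by
  have hmap (i : ι) : (Measure.pi ρ).map (Function.eval i) = ρ i :=
    (measurePreserving_eval ρ i).map_eq
  have hsingleton (x : ι → α) : (Measure.pi ρ).real {x} = ∏ i, (ρ i).real {x i} := by
    rw [measureReal_def, Measure.pi_singleton, ENNReal.toReal_prod]; rfl
  calc entropy (Measure.pi ρ)
      = -∑ x, (Measure.pi ρ).real {x} * ∑ i, logb 2 ((ρ i).real {x i}) := by
        refine congrArg Neg.neg (Finset.sum_congr rfl fun x _ => ?_)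
        by_cases hx : ∏ i, (ρ i).real {x i} = 0
        · simp [← measureReal_def, hsingleton, hx]
        · rw [← measureReal_def, ← logb_prod _ _ (by simpa [Finset.prod_eq_zero_iff] using hx),
            hsingleton]
    _ = ∑ i, -∑ x, (Measure.pi ρ).real {x} * logb 2 ((ρ i).real {x i}) := by
        simp only [Finset.mul_sum, Finset.sum_neg_distrib]
        rw [Finset.sum_comm]
    _ = ∑ i, entropy (ρ i) := Finset.sum_congr rfl fun i _ => by
        simpa only [hmap] using (entropy_map_eq_sum (Measure.pi ρ) (Function.eval i)).symm

/-- Subadditivity, averaged over the law of `(f, g)` conditioned on `h`. -/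
lemma entropy_submodular (μ : Measure Ω) [IsProbabilityMeasure μ] {f : Ω → α} {g : Ω → β}
    {h : Ω → γ} (hf : Measurable f) (hg : Measurable g) (hh : Measurable h) :
    entropy (μ.map fun ω => (h ω, f ω, g ω)) + entropy (μ.map h) ≤
      entropy (μ.map fun ω => (h ω, f ω)) + entropy (μ.map fun ω => (h ω, g ω)) := by
  have : Nonempty (α × β) := μ.nonempty_of_neZero.map fun ω => (f ω, g ω)
  have : IsProbabilityMeasure (μ.map h) := Measure.isProbabilityMeasure_map hh.aemeasurable
  let κ := condDistrib (fun ω => (f ω, g ω)) h μ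
  have hκ : μ.map h ⊗ₘ κ = μ.map fun ω => (h ω, f ω, g ω) :=
    compProd_map_condDistrib (by fun_prop)
  have hκ₁ : μ.map h ⊗ₘ κ.map Prod.fst = μ.map fun ω => (h ω, f ω) := by
    rw [Measure.compProd_map measurable_fst, hκ, Measure.map_map (by fun_prop) (by fun_prop)]
    rfl
  have hκ₂ : μ.map h ⊗ₘ κ.map Prod.snd = μ.map fun ω => (h ω, g ω) := by
    rw [Measure.compProd_map measurable_snd, hκ, Measure.map_map (by fun_prop) (by fun_prop)]
    rfl
  have : IsMarkovKernel (κ.map Prod.fst) := Kernel.IsMarkovKernel.map κ measurable_fst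
  have : IsMarkovKernel (κ.map Prod.snd) := Kernel.IsMarkovKernel.map κ measurable_snd
  have hle : ∫ c, entropy (κ c) ∂μ.map h ≤
      ∫ c, entropy (κ.map Prod.fst c) ∂μ.map h + ∫ c, entropy (κ.map Prod.snd c) ∂μ.map h := by
    rw [← integral_add .of_finite .of_finite]
    refine integral_mono .of_finite .of_finite fun c => ?_
    simpa only [Kernel.map_apply _ measurable_fst, Kernel.map_apply _ measurable_snd]
      using entropy_le_add (κ c)
  rw [← hκ, ← hκ₁, ← hκ₂, entropy_compProd, entropy_compProd, entropy_compProd]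
  linarith

lemma entropy_map_prodMk_pi_le (μ : Measure Ω) [IsProbabilityMeasure μ] {W : Ω → β}
    (hW : Measurable W) {n : ℕ} {X : Fin n → Ω → α} (hX : ∀ t, Measurable (X t)) :
    entropy (μ.map fun ω => (W ω, fun t => X t ω)) - entropy (μ.map W) ≤
      ∑ t, (entropy (μ.map fun ω => (W ω, X t ω)) - entropy (μ.map W)) := by
  induction n with
  | zero =>
    have hnil (ω : Ω) : (fun t => X t ω) = Fin.elim0 := Subsingleton.elim _ _
    simpa [hnil] using entropy_map_comp_le μ hW fun w => (w, (Fin.elim0 : Fin 0 → α))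
  | succ n ih =>
    let Xtail (ω : Ω) (t : Fin n) : α := X t.succ ω
    have hXtail : Measurable Xtail := measurable_pi_lambda _ fun t => hX t.succ
    have hcons (ω : Ω) : (fun t => X t ω) = Fin.cons (X 0 ω) (Xtail ω) :=
      (Fin.cons_self_tail fun t => X t ω).symm
    calc entropy (μ.map fun ω => (W ω, fun t => X t ω)) - entropy (μ.map W)
        ≤ entropy (μ.map fun ω => (W ω, X 0 ω, Xtail ω)) - entropy (μ.map W) := by
          simp only [hcons]
          exact sub_le_sub_right (entropy_map_comp_le μ (hW.prodMk ((hX 0).prodMk hXtail))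
            fun z => (z.1, (Fin.cons z.2.1 z.2.2 : Fin (n + 1) → α))) _
      _ ≤ (entropy (μ.map fun ω => (W ω, X 0 ω)) - entropy (μ.map W)) +
          (entropy (μ.map fun ω => (W ω, Xtail ω)) - entropy (μ.map W)) := by
          linarith [entropy_submodular μ (hX 0) hXtail hW]
      _ ≤ _ := by
          rw [Fin.sum_univ_succ]
          gcongr
          exact ih fun t => hX t.succ

end Entropy

lemma mutualInfo_map_prodMk {Ω α β : Type*} [MeasurableSpace Ω]
    [Fintype α] [MeasurableSpace α] [Fintype β] [MeasurableSpace β] (μ : Measure Ω)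
    {f : Ω → α} {g : Ω → β} (hf : Measurable f) (hg : Measurable g) :
    mutualInfo (μ.map fun ω => (f ω, g ω)) =
      entropy (μ.map f) + entropy (μ.map g) - entropy (μ.map fun ω => (f ω, g ω)) := by
  rw [mutualInfo, ← Measure.fst, ← Measure.snd, Measure.fst_map_prodMk hg,
    Measure.snd_map_prodMk hf]

section MutualInfo

variable {Ω α β γ : Type*} [MeasurableSpace Ω]
  [Fintype α] [MeasurableSpace α] [MeasurableSingletonClass α]
  [Fintype β] [MeasurableSpace β] [MeasurableSingletonClass β]
  [Fintype γ] [MeasurableSpace γ] [MeasurableSingletonClass γ]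

lemma mutualInfo_map_comp_le (μ : Measure Ω) [IsProbabilityMeasure μ] {W : Ω → α} {X : Ω → β}
    (hW : Measurable W) (hX : Measurable X) (g : α → γ) :
    mutualInfo (μ.map fun ω => (g (W ω), X ω)) ≤ mutualInfo (μ.map fun ω => (W ω, X ω)) := by
  have hgW : Measurable fun ω => g (W ω) := (measurable_of_finite g).comp hW
  have hsub := entropy_submodular μ hW hX hgW
  have hdrop : entropy (μ.map fun ω => (W ω, X ω)) ≤
      entropy (μ.map fun ω => (g (W ω), W ω, X ω)) :=
    entropy_map_comp_le μ (hgW.prodMk (hW.prodMk hX)) Prod.snd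
  have hpair : entropy (μ.map fun ω => (g (W ω), W ω)) ≤ entropy (μ.map W) :=
    entropy_map_comp_le μ hW fun w => (g w, w)
  rw [mutualInfo_map_prodMk μ hgW hX, mutualInfo_map_prodMk μ hW hX]
  linarith

lemma sum_mutualInfo_le_of_iIndepFun (μ : Measure Ω) [IsProbabilityMeasure μ] {W : Ω → β}
    (hW : Measurable W) {n : ℕ} {X : Fin n → Ω → α} (hX : ∀ t, Measurable (X t))
    (hindep : iIndepFun X μ) :
    ∑ t, mutualInfo (μ.map fun ω => (W ω, X t ω)) ≤
      mutualInfo (μ.map fun ω => (W ω, fun t => X t ω)) := by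
  have (t : Fin n) : IsProbabilityMeasure (μ.map (X t)) :=
    Measure.isProbabilityMeasure_map (hX t).aemeasurable
  have hsum : entropy (μ.map fun ω t => X t ω) = ∑ t, entropy (μ.map (X t)) := by
    rw [(iIndepFun_iff_map_fun_eq_pi_map fun t => (hX t).aemeasurable).1 hindep, entropy_pi]
  have hcond := entropy_map_prodMk_pi_le μ hW hX
  simp only [mutualInfo_map_prodMk μ hW (hX _)]
  rw [mutualInfo_map_prodMk μ hW (by fun_prop), hsum]
  simp only [Finset.sum_sub_distrib, Finset.sum_add_distrib] at hcond ⊢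
  linarith

lemma entropy_map_prodMk_of_indepFun (μ : Measure Ω) [IsProbabilityMeasure μ]
    {f : Ω → α} {g : Ω → β} (hf : Measurable f) (hg : Measurable g) (hindep : IndepFun f g μ) :
    entropy (μ.map fun ω => (f ω, g ω)) = entropy (μ.map f) + entropy (μ.map g) := by
  have : IsProbabilityMeasure (μ.map f) := Measure.isProbabilityMeasure_map hf.aemeasurable
  have : IsProbabilityMeasure (μ.map g) := Measure.isProbabilityMeasure_map hg.aemeasurable
  rw [(indepFun_iff_map_prod_eq_prod_map_map hf.aemeasurable hg.aemeasurable).1 hindep,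
    ← Measure.compProd_const, entropy_compProd]
  simp

lemma mutualInfo_map_prodMk_le_of_indepFun (μ : Measure Ω) [IsProbabilityMeasure μ]
    {M : Ω → α} {J : Ω → β} {X : Ω → γ} (hM : Measurable M) (hJ : Measurable J)
    (hX : Measurable X) (hindep : IndepFun X J μ) :
    mutualInfo (μ.map fun ω => ((M ω, J ω), X ω)) ≤ entropy (μ.map M) := by
  have hMJ : entropy (μ.map fun ω => (M ω, J ω)) ≤ entropy (μ.map M) + entropy (μ.map J) :=
    entropy_map_prodMk_le μ hM hJ
  have hXJ : entropy (μ.map X) + entropy (μ.map J) ≤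
      entropy (μ.map fun ω => ((M ω, J ω), X ω)) := by
    rw [← entropy_map_prodMk_of_indepFun μ hX hJ hindep]
    exact entropy_map_comp_le μ ((hM.prodMk hJ).prodMk hX) fun z => (z.2, z.1.2)
  rw [mutualInfo_map_prodMk μ (hM.prodMk hJ) hX]
  linarith

lemma map_prodMap_id_compProd_comap {α β γ : Type*} [MeasurableSpace α] [MeasurableSpace β]
    [MeasurableSpace γ] (ρ : Measure α) [SFinite ρ] (κ : Kernel β γ) [IsSFiniteKernel κ]
    {f : α → β} (hf : Measurable f) :
    (ρ ⊗ₘ κ.comap f hf).map (Prod.map f id) = ρ.map f ⊗ₘ κ := by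
  ext s hs
  rw [Measure.map_apply (by fun_prop) hs, Measure.compProd_apply (by measurability),
    Measure.compProd_apply hs, lintegral_map (Kernel.measurable_kernel_prodMk_left hs) hf]
  rfl

/-- Equality case of the data-processing inequality, for a Markov chain `A - B - C`. -/
lemma mutualInfo_compProd_comap_snd (ρ : Measure (α × β)) [IsFiniteMeasure ρ]
    (κ : Kernel β γ) [IsMarkovKernel κ] :
    mutualInfo ((ρ ⊗ₘ κ.comap Prod.snd measurable_snd).map fun z => ((z.1.2, z.2), z.1.1)) =
      mutualInfo (ρ.map fun z => (z.2, z.1)) := by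
  set μ := ρ ⊗ₘ κ.comap Prod.snd measurable_snd with hμ
  have hAB : μ.map Prod.fst = ρ := Measure.fst_compProd ρ _
  have hA : μ.map (fun z => z.1.1) = ρ.map Prod.fst := by
    rw [← hAB, Measure.map_map (by fun_prop) (by fun_prop)]; rfl
  have hBC : μ.map (fun z => (z.1.2, z.2)) = ρ.map Prod.snd ⊗ₘ κ :=
    map_prodMap_id_compProd_comap ρ κ measurable_snd
  have hABC : entropy (μ.map fun z => ((z.1.2, z.2), z.1.1)) = entropy μ := by
    refine le_antisymm (entropy_map_le μ _) ?_
    simpa using entropy_map_comp_le μ (f := fun z => ((z.1.2, z.2), z.1.1)) (by fun_prop)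
      fun w => ((w.2, w.1.1), w.1.2)
  have hBA : entropy (ρ.map fun z => (z.2, z.1)) = entropy ρ := by
    simpa using entropy_map_prodMk_comm ρ measurable_snd measurable_fst
  rw [mutualInfo_map_prodMk μ (by fun_prop) (by fun_prop), hABC, hA, hBC, hμ, entropy_compProd,
    entropy_compProd, integral_map (by fun_prop) .of_discrete,
    mutualInfo_map_prodMk ρ (by fun_prop) (by fun_prop), hBA]
  simp only [Kernel.comap_apply]
  ring

end MutualInfo

lemma map_mixture_of_identDistrib {Ω ι α : Type*} [MeasurableSpace Ω] [Countable ι]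
    [MeasurableSpace ι] [MeasurableSingletonClass ι] [MeasurableSpace α]
    (μ : Measure Ω) [SFinite μ] (ν : Measure ι) [IsProbabilityMeasure ν] {p : Measure α}
    {X : ι → Ω → α} (hX : ∀ t, Measurable (X t)) (hp : ∀ t, μ.map (X t) = p) :
    (μ.prod ν).map (fun z => X z.2 z.1) = p := by
  have hjoint : Measurable fun z : Ω × ι => X z.2 z.1 := measurable_from_prod_countable_left hX
  ext s hs
  have hfiber (t : ι) : μ (X t ⁻¹' s) = p s := by rw [← hp t, Measure.map_apply (hX t) hs]
  rw [Measure.map_apply hjoint hs, Measure.prod_apply_symm (hjoint hs)]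
  simp [Set.preimage_preimage, hfiber]

lemma indepFun_of_map_eq_prod {Ω α β : Type*} [MeasurableSpace Ω] [MeasurableSpace α]
    [MeasurableSpace β] {μ : Measure Ω} [IsFiniteMeasure μ] {f : Ω → α} {g : Ω → β}
    (hf : Measurable f) (hg : Measurable g) {ρ : Measure α} [IsProbabilityMeasure ρ]
    {ν : Measure β} [IsProbabilityMeasure ν] (h : μ.map (fun ω => (f ω, g ω)) = ρ.prod ν) :
    IndepFun f g μ := by
  have hρ : μ.map f = ρ := by rw [← Measure.fst_map_prodMk hg, h, Measure.fst_prod]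
  have hν : μ.map g = ν := by rw [← Measure.snd_map_prodMk hf, h, Measure.snd_prod]
  rw [indepFun_iff_map_prod_eq_prod_map_map hf.aemeasurable hg.aemeasurable, h, hρ, hν]

lemma map_eval_of_map_eq_pi {Ω ι : Type*} {α : ι → Type*} [MeasurableSpace Ω] [Fintype ι]
    [∀ i, MeasurableSpace (α i)] {μ : Measure Ω} {X : Ω → ∀ i, α i} (hX : Measurable X)
    {ρ : ∀ i, Measure (α i)} [∀ i, IsProbabilityMeasure (ρ i)] (h : μ.map X = Measure.pi ρ)
    (i : ι) : μ.map (fun ω => X ω i) = ρ i := by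
  rw [← (measurePreserving_eval ρ i).map_eq, ← h, Measure.map_map (measurable_pi_apply i) hX]
  rfl

lemma iIndepFun_of_map_eq_pi {Ω ι : Type*} {α : ι → Type*} [MeasurableSpace Ω] [Fintype ι]
    [∀ i, MeasurableSpace (α i)] {μ : Measure Ω} [IsProbabilityMeasure μ] {X : Ω → ∀ i, α i}
    (hX : Measurable X) {ρ : ∀ i, Measure (α i)} [∀ i, IsProbabilityMeasure (ρ i)]
    (h : μ.map X = Measure.pi ρ) : iIndepFun (fun i ω => X ω i) μ := by
  rw [iIndepFun_iff_map_fun_eq_pi_map fun i => (hX.eval (a := i)).aemeasurable]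
  simpa only [map_eval_of_map_eq_pi hX h] using h

section TimeSharing

variable {Ω ι α β : Type*} [MeasurableSpace Ω]
  [Fintype ι] [MeasurableSpace ι] [MeasurableSingletonClass ι]
  [Fintype α] [MeasurableSpace α] [MeasurableSingletonClass α]
  [Fintype β] [MeasurableSpace β] [MeasurableSingletonClass β]

lemma entropy_map_prodMk_mixture (μ : Measure Ω) [IsProbabilityMeasure μ] (ν : Measure ι)
    [IsFiniteMeasure ν] {f : ι → Ω → α} (hf : ∀ t, Measurable (f t)) :
    entropy ((μ.prod ν).map fun z => (z.2, f z.2 z.1)) =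
      entropy ν + ∫ t, entropy (μ.map (f t)) ∂ν := by
  let κ : Kernel ι α := Kernel.ofFunOfCountable fun t => μ.map (f t)
  have : IsMarkovKernel κ := ⟨fun t => Measure.isProbabilityMeasure_map (hf t).aemeasurable⟩
  have hjoint : Measurable fun z : Ω × ι => f z.2 z.1 := measurable_from_prod_countable_left hf
  have hlaw : (μ.prod ν).map (fun z => (z.2, f z.2 z.1)) = ν ⊗ₘ κ := by
    ext s hs
    have hTf : Measurable fun z : Ω × ι => (z.2, f z.2 z.1) := measurable_snd.prodMk hjoint
    rw [Measure.map_apply hTf hs, Measure.prod_apply_symm (hTf hs), Measure.compProd_apply hs]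
    exact lintegral_congr fun t =>
      (Measure.map_apply (hf t) (measurable_prodMk_left hs)).symm
  rw [hlaw, entropy_compProd]
  rfl

/-- There is no term `I(T; X_T)` on the right: `T ∼ ν` is independent of `X_T ∼ p`. -/
lemma mutualInfo_map_mixture (μ : Measure Ω) [IsProbabilityMeasure μ] (ν : Measure ι)
    [IsProbabilityMeasure ν] {V : ι → Ω → α} {X : ι → Ω → β} (hV : ∀ t, Measurable (V t))
    (hX : ∀ t, Measurable (X t)) {p : Measure β} (hp : ∀ t, μ.map (X t) = p) :
    mutualInfo ((μ.prod ν).map fun z => ((z.2, V z.2 z.1), X z.2 z.1)) =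
      ∫ t, mutualInfo (μ.map fun ω => (V t ω, X t ω)) ∂ν := by
  have hVjoint : Measurable fun z : Ω × ι => V z.2 z.1 := measurable_from_prod_countable_left hV
  have hXjoint : Measurable fun z : Ω × ι => X z.2 z.1 := measurable_from_prod_countable_left hX
  have hassoc : entropy ((μ.prod ν).map fun z => ((z.2, V z.2 z.1), X z.2 z.1)) =
      entropy ((μ.prod ν).map fun z => (z.2, (V z.2 z.1, X z.2 z.1))) :=
    le_antisymm
      (entropy_map_comp_le (μ.prod ν) (measurable_snd.prodMk (hVjoint.prodMk hXjoint))
        MeasurableEquiv.prodAssoc.symm)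
      (entropy_map_comp_le (μ.prod ν) ((measurable_snd.prodMk hVjoint).prodMk hXjoint)
        MeasurableEquiv.prodAssoc)
  rw [mutualInfo_map_prodMk (μ.prod ν) (measurable_snd.prodMk hVjoint) hXjoint, hassoc,
    entropy_map_prodMk_mixture μ ν hV,
    entropy_map_prodMk_mixture μ ν (f := fun t ω => (V t ω, X t ω)) fun t => (hV t).prodMk (hX t),
    map_mixture_of_identDistrib μ ν hX hp]
  simp only [mutualInfo_map_prodMk μ (hV _) (hX _), hp]
  rw [integral_sub .of_finite .of_finite, integral_add .of_finite .of_finite]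
  simp only [integral_const, probReal_univ, one_smul]
  ring

instance [Nonempty ι] : IsProbabilityMeasure (unif ι) :=
  ⟨by simp [unif, Measure.count_univ, ENNReal.inv_mul_cancel]⟩

lemma card_mul_integral_unif [Nonempty ι] (f : ι → ℝ) :
    (Fintype.card ι : ℝ) * ∫ t, f t ∂unif ι = ∑ t, f t := by
  have : (Fintype.card ι : ℝ) ≠ 0 := by simp
  simp [unif, integral_smul_measure, this]

end TimeSharing

lemma sum_mutualInfo_le_entropy_of_markov {α β γ δ : Type*}
    [Fintype α] [MeasurableSpace α] [MeasurableSingletonClass α]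
    [Fintype β] [MeasurableSpace β] [MeasurableSingletonClass β]
    [Fintype γ] [MeasurableSpace γ] [MeasurableSingletonClass γ]
    [Fintype δ] [MeasurableSpace δ] [MeasurableSingletonClass δ]
    {n : ℕ} {μ : Measure (((Fin n → α) × β × γ) × δ)} [IsProbabilityMeasure μ]
    (hiIndep : iIndepFun (fun t ω => ω.1.1 t) μ)
    (hindep : IndepFun (fun ω => ω.1.1) (fun ω => ω.1.2.2) μ)
    (hMarkov : ∃ κ : Kernel (β × γ) δ, IsMarkovKernel κ ∧
      μ = (μ.map Prod.fst) ⊗ₘ (κ.comap Prod.snd measurable_snd)) :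
    ∑ t, mutualInfo (μ.map fun ω => ((ω.1.2, ω.2), ω.1.1 t)) ≤
      entropy (μ.map fun ω => ω.1.2.1) := by
  obtain ⟨κ, hκ, hμκ⟩ := hMarkov
  calc ∑ t, mutualInfo (μ.map fun ω => ((ω.1.2, ω.2), ω.1.1 t))
      ≤ mutualInfo (μ.map fun ω => ((ω.1.2, ω.2), ω.1.1)) :=
        sum_mutualInfo_le_of_iIndepFun μ (W := fun ω => (ω.1.2, ω.2)) (by fun_prop)
          (fun t => by fun_prop) hiIndep
    _ = mutualInfo (μ.map fun ω => (ω.1.2, ω.1.1)) := by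
        have hMJX := mutualInfo_compProd_comap_snd (μ.map Prod.fst) κ
        rwa [← hμκ, Measure.map_map (by fun_prop) (by fun_prop)] at hMJX
    _ ≤ entropy (μ.map fun ω => ω.1.2.1) :=
        mutualInfo_map_prodMk_le_of_indepFun μ (by fun_prop) (by fun_prop) (by fun_prop) hindep

theorem stmt_6_general {𝓧 𝓨 𝓤 𝓜 𝓙 : Type*}
    [Fintype 𝓧] [MeasurableSpace 𝓧] [MeasurableSingletonClass 𝓧]
    [Finite 𝓨] [MeasurableSpace 𝓨] [MeasurableSingletonClass 𝓨]
    [Fintype 𝓤] [MeasurableSpace 𝓤] [MeasurableSingletonClass 𝓤]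
    [Fintype 𝓜] [MeasurableSpace 𝓜] [MeasurableSingletonClass 𝓜]
    [Fintype 𝓙] [MeasurableSpace 𝓙] [MeasurableSingletonClass 𝓙]
    {n : ℕ} (hn : 0 < n) (p : Measure 𝓧) [IsProbabilityMeasure p]
    (ν : Measure 𝓙) [IsProbabilityMeasure ν]
    (μ : Measure (((Fin n → 𝓧) × 𝓜 × 𝓙) × 𝓨)) [IsProbabilityMeasure μ]
    (hXJ : μ.map (fun ω => (ω.1.1, ω.1.2.2)) = (Measure.pi fun _ => p).prod ν)
    (hMarkov : ∃ κ : Kernel (𝓜 × 𝓙) 𝓨, IsMarkovKernel κ ∧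
      μ = (μ.map Prod.fst) ⊗ₘ (κ.comap Prod.snd measurable_snd))
    (U : Fin n → 𝓨 → 𝓤) :
    n * mutualInfo ((μ.prod (unif (Fin n))).map
        (fun ω => ((ω.1.1.2.1, ω.1.1.2.2, ω.2, U ω.2 ω.1.2), ω.1.1.1 ω.2))) ≤
      entropy (μ.map (fun ω => ω.1.2.1)) := by
  have := Fintype.ofFinite 𝓨
  have : Nonempty (Fin n) := ⟨⟨0, hn⟩⟩
  let Ω := ((Fin n → 𝓧) × 𝓜 × 𝓙) × 𝓨
  let X (t : Fin n) (ω : Ω) : 𝓧 := ω.1.1 t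
  let W (ω : Ω) : (𝓜 × 𝓙) × 𝓨 := (ω.1.2, ω.2)
  let V (t : Fin n) (ω : Ω) : (𝓜 × 𝓙) × 𝓤 := (ω.1.2, U t ω.2)
  let TV (z : Ω × Fin n) : Fin n × (𝓜 × 𝓙) × 𝓤 := (z.2, V z.2 z.1)
  have hX (t : Fin n) : Measurable (X t) := measurable_of_finite _
  have hlaw : μ.map (fun ω => ω.1.1) = Measure.pi fun _ => p := by
    rw [← Measure.fst_map_prodMk (by fun_prop : Measurable fun ω : Ω => ω.1.2.2), hXJ,
      Measure.fst_prod]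
  calc n * mutualInfo ((μ.prod (unif (Fin n))).map
        (fun ω => ((ω.1.1.2.1, ω.1.1.2.2, ω.2, U ω.2 ω.1.2), ω.1.1.1 ω.2)))
      ≤ n * mutualInfo ((μ.prod (unif (Fin n))).map fun z => (TV z, X z.2 z.1)) := by
        gcongr
        exact mutualInfo_map_comp_le _ (measurable_of_finite TV) (measurable_of_finite _)
          fun v => (v.2.1.1, v.2.1.2, v.1, v.2.2)
    _ = ∑ t, mutualInfo (μ.map fun ω => (V t ω, X t ω)) := by
        rw [mutualInfo_map_mixture μ _ (fun _ => measurable_of_finite _) hX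
          (map_eval_of_map_eq_pi (by fun_prop) hlaw), ← card_mul_integral_unif, Fintype.card_fin]
    _ ≤ ∑ t, mutualInfo (μ.map fun ω => (W ω, X t ω)) :=
        Finset.sum_le_sum fun t _ =>
          mutualInfo_map_comp_le μ (measurable_of_finite W) (hX t) fun w => (w.1, U t w.2)
    _ ≤ entropy (μ.map fun ω => ω.1.2.1) :=
        sum_mutualInfo_le_entropy_of_markov (iIndepFun_of_map_eq_pi (by fun_prop) hlaw)
          (indepFun_of_map_eq_prod (by fun_prop) (by fun_prop) hXJ) hMarkov

/-- Converse bound on the compression rate: with X^n i.i.d. ∼ p, J uniform and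
independent of X^n, M ∈ [2^{nR}], the Markov chain X^n − (M,J) − Y^n, and T uniform
on [n] with V = (M, J, T, Y^{T−1}), if nR ≥ H(M) then R ≥ I(V ; X_T). -/
theorem stmt_6 {Xty Mty Jty : Type*}
    [Fintype Xty] [MeasurableSpace Xty] [MeasurableSingletonClass Xty]
    [Fintype Mty] [MeasurableSpace Mty] [MeasurableSingletonClass Mty]
    [Fintype Jty] [MeasurableSpace Jty] [MeasurableSingletonClass Jty]
    {n : ℕ} (hn : 0 < n) (R : ℝ)
    (p : Measure Xty) [IsProbabilityMeasure p]
    (μ : Measure (((Fin n → Xty) × Mty × Jty) × (Fin n → Xty))) [IsProbabilityMeasure μ]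
    -- X^n is i.i.d. with distribution p, and J is uniform and independent of X^n
    (hXJ : μ.map (fun ω => (ω.1.1, ω.1.2.2)) = (Measure.pi fun _ => p).prod (unif Jty))
    -- Markov chain X^n − (M,J) − Y^n
    (hMarkov : ∃ κ : Kernel (Mty × Jty) (Fin n → Xty), IsMarkovKernel κ ∧
      μ = (μ.map Prod.fst) ⊗ₘ (κ.comap Prod.snd measurable_snd))
    -- M takes values in [2^{nR}]
    (hcard : (Fintype.card Mty : ℝ) ≤ 2 ^ ((n : ℝ) * R))
    -- nR ≥ H(M)
    (hH : entropy (μ.map (fun ω => ω.1.2.1)) ≤ (n : ℝ) * R) :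
    mutualInfo ((μ.prod (unif (Fin n))).map
        (fun ω => ((ω.1.1.2.1, ω.1.1.2.2, ω.2, prefixOf ω.1.2 ω.2), ω.1.1.1 ω.2))) ≤ R := by
  have : Nonempty Jty := μ.nonempty_of_neZero.map fun ω => ω.1.2.2
  exact le_of_mul_le_mul_left ((stmt_6_general hn p (unif Jty) μ hXJ hMarkov
    fun t y => prefixOf y t).trans hH) (Nat.cast_pos.2 hn)
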